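/- For every n ≥ 1 and a > 0, the spectral gaps of the Metropolis chains satisfy 1/(8 η_{−a}(1,n) η_a(2,n+1)) ≤ λ̌_{n,a} ≤ 2/(η_{−a}(1,n) η_a(2,n+1)) and 1/(64 η_a(1,⌈n/2⌉) η_{−a}(⌈n/2⌉,n)) ≤ λ̂_{n,a} ≤ 1/(2 η_a(1,⌈n/2⌉) η_{−a}(⌈n/2⌉,n)), where η_a(k,l) = Σ_{i=k}^{l} i^a. -/

import Mathlib

open Finset

/-- `η_a(k,l) = Σ_{i=k}^l i^a`. -/
noncomputable def eta (a : ℝ) (k l : ℕ) : ℝ :=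
  ∑ i ∈ Finset.Icc k l, (i : ℝ) ^ a

/-- The Metropolis chain `Ǩ_{n,a}` for `π̌_{n,a}(i) ∝ (|i|+1)^a`, described for
non-negative states `i ≥ 0` (the general entry is obtained by the symmetry
`K(i,j) = K(−i,−j)`). -/
noncomputable def checkKpos (n : ℕ) (a : ℝ) (i j : ℤ) : ℝ :=
  if j = i + 1 ∧ i < (n : ℤ) then 1 / 2
  else if j = i - 1 ∧ 1 ≤ i ∧ i ≤ (n : ℤ) then (i : ℝ) ^ a / (2 * ((i : ℝ) + 1) ^ a)
  else if i = 0 ∧ j = -1 then 1 / 2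
  else if j = i ∧ i = (n : ℤ) then 1 - (n : ℝ) ^ a / (2 * ((n : ℝ) + 1) ^ a)
  else if j = i ∧ 1 ≤ i then (((i : ℝ) + 1) ^ a - (i : ℝ) ^ a) / (2 * ((i : ℝ) + 1) ^ a)
  else 0

/-- The full kernel `Ǩ_{n,a}` on `ℤ`, using the symmetry `K(i,j) = K(−i,−j)`. -/
noncomputable def checkK (n : ℕ) (a : ℝ) (i j : ℤ) : ℝ :=
  if 0 ≤ i then checkKpos n a i j else checkKpos n a (-i) (-j)

/-- The Metropolis chain `K̂_{n,a}` for `π̂_{n,a}(i) ∝ (n−|i|+1)^a`, described for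
non-negative states `i ≥ 0`. -/
noncomputable def hatKpos (n : ℕ) (a : ℝ) (i j : ℤ) : ℝ :=
  if j = i - 1 ∧ 1 ≤ i ∧ i ≤ (n : ℤ) then 1 / 2
  else if j = i + 1 ∧ 0 ≤ i ∧ i < (n : ℤ) then
    ((n : ℝ) - (i : ℝ)) ^ a / (2 * ((n : ℝ) - (i : ℝ) + 1) ^ a)
  else if i = 0 ∧ j = -1 then (n : ℝ) ^ a / (2 * ((n : ℝ) + 1) ^ a)
  else if j = i ∧ i = 0 then 1 - (n : ℝ) ^ a / ((n : ℝ) + 1) ^ a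
  else if j = i ∧ 1 ≤ i then
    (((n : ℝ) - (i : ℝ) + 1) ^ a - ((n : ℝ) - (i : ℝ)) ^ a) /
      (2 * ((n : ℝ) - (i : ℝ) + 1) ^ a)
  else 0

/-- The full kernel `K̂_{n,a}` on `ℤ`, using the symmetry `K(i,j) = K(−i,−j)`. -/
noncomputable def hatK (n : ℕ) (a : ℝ) (i j : ℤ) : ℝ :=
  if 0 ≤ i then hatKpos n a i j else hatKpos n a (-i) (-j)

/-- The matrix of `Ǩ_{n,a}` on the `2n+1` states `{0, ±1, …, ±n}`, the state of
index `i ∈ {0,…,2n}` being `i − n ∈ {−n,…,n}`. -/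
noncomputable def checkMat (n : ℕ) (a : ℝ) :
    Matrix (Fin (2 * n + 1)) (Fin (2 * n + 1)) ℝ :=
  Matrix.of fun i j => checkK n a (((i : ℕ) : ℤ) - (n : ℤ)) (((j : ℕ) : ℤ) - (n : ℤ))

/-- The matrix of `K̂_{n,a}` on the `2n+1` states `{0, ±1, …, ±n}`. -/
noncomputable def hatMat (n : ℕ) (a : ℝ) :
    Matrix (Fin (2 * n + 1)) (Fin (2 * n + 1)) ℝ :=
  Matrix.of fun i j => hatK n a (((i : ℕ) : ℤ) - (n : ℤ)) (((j : ℕ) : ℤ) - (n : ℤ))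

/-- `gap` is the spectral gap of the chain `K`: the smallest non-zero eigenvalue of
`I − K`. -/
def IsGapOf {m : ℕ} (K : Matrix (Fin (m + 1)) (Fin (m + 1)) ℝ) (gap : ℝ) : Prop :=
  IsLeast {μ : ℝ | μ ≠ 0 ∧ ∃ v : Fin (m + 1) → ℝ, v ≠ 0 ∧
    (1 - K).mulVec v = μ • v} gap

/-! Both chains are birth–death chains on `{-n, …, n}` invariant under `x ↦ -x`, so they are
governed by the products `(∑_{j ≤ r} 1 / w j) (∑_{d ≥ r} p d)` of resistance and mass on the
positive half-line. If `B` bounds all of them, Muckenhoupt's form of Hardy's inequality on each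
half-line gives the Poincaré inequality with constant `4 B`. Conversely, the odd function equal to
`∑_{j ≤ min d r} 1 / w j` at `d ≥ 0` has mean zero, and its Rayleigh quotient is at most the
inverse of the product at `r`.

For power weights all the products are bounded, up to a constant, by the one in the middle: after
scaling, the terms of one power sum are dominated by those of another along the two-to-one map
`i ↦ i / 2`. -/

section Hardy

lemma sub_div_sqrt_le {x y : ℝ} (hy : 0 ≤ y) (hyx : y ≤ x) :
    (x - y) / √x ≤ 2 * (√x - √y) := by
  refine div_le_of_le_mul₀ x.sqrt_nonneg (by linarith [Real.sqrt_le_sqrt hyx]) ?_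
  nlinarith [sq_nonneg (√x - √y), Real.sq_sqrt hy, Real.sq_sqrt (hy.trans hyx)]

variable {ι : Type*} [LinearOrder ι]

lemma sum_div_sqrt_sum_filter_le (s : Finset ι) {u : ι → ℝ} (hu : ∀ i ∈ s, 0 ≤ u i) :
    ∑ j ∈ s, u j / √(∑ i ∈ s with i ≤ j, u i) ≤ 2 * √(∑ i ∈ s, u i) := by
  induction s using Finset.induction_on_max with
  | empty => simp
  | insert a s hmax ih =>
    obtain ⟨hua, hus⟩ := forall_mem_insert _ _ _ |>.1 hu
    have ha : a ∉ s := fun h => lt_irrefl a (hmax a h)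
    have hfa : {i ∈ insert a s | i ≤ a} = insert a s :=
      filter_true_of_mem fun i hi => (mem_insert.1 hi).elim le_of_eq fun h => (hmax i h).le
    have hfs : ∀ j ∈ s, u j / √(∑ i ∈ insert a s with i ≤ j, u i) =
        u j / √(∑ i ∈ s with i ≤ j, u i) := fun j hj => by
      rw [filter_insert, if_neg (hmax j hj).not_ge]
    have hstep := sub_div_sqrt_le (sum_nonneg hus) (le_add_of_nonneg_left hua)
    rw [add_sub_cancel_right] at hstep
    rw [sum_insert ha, hfa, sum_insert ha, sum_congr rfl hfs]
    linarith [ih hus]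

lemma sum_filter_le_div_sqrt_le (s : Finset ι) {u : ι → ℝ} (hu : ∀ i ∈ s, 0 ≤ u i) (x : ι) :
    ∑ j ∈ s with j ≤ x, u j / √(∑ i ∈ s with i ≤ j, u i) ≤
      2 * √(∑ j ∈ s with j ≤ x, u j) := by
  refine le_of_eq_of_le (sum_congr rfl fun j hj => ?_)
    (sum_div_sqrt_sum_filter_le _ fun j hj => hu j (mem_filter.1 hj).1)
  have hjx := (mem_filter.1 hj).2
  rw [filter_filter, filter_congr fun i _ => (and_iff_right_of_imp (hjx.trans' ·)).symm]

lemma sum_filter_ge_div_sqrt_le (s : Finset ι) {u : ι → ℝ} (hu : ∀ i ∈ s, 0 ≤ u i) (x : ι) :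
    ∑ j ∈ s with x ≤ j, u j / √(∑ i ∈ s with j ≤ i, u i) ≤
      2 * √(∑ j ∈ s with x ≤ j, u j) :=
  sum_filter_le_div_sqrt_le (ι := ιᵒᵈ) s hu x

lemma sq_sum_filter_le_sum_mul_sqrt (s : Finset ι) {w : ι → ℝ} (hw : ∀ j ∈ s, 0 < w j)
    (δ : ι → ℝ) (x : ι) :
    (∑ j ∈ s with j ≤ x, δ j) ^ 2 ≤
      (∑ j ∈ s with j ≤ x, w j * √(∑ i ∈ s with i ≤ j, (w i)⁻¹) * δ j ^ 2) *
        (2 * √(∑ j ∈ s with j ≤ x, (w j)⁻¹)) := by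
  have hw' : ∀ j ∈ {j ∈ s | j ≤ x}, 0 < w j := fun j hj => hw j (mem_filter.1 hj).1
  have hφ_pos : ∀ j ∈ {j ∈ s | j ≤ x}, 0 < ∑ i ∈ s with i ≤ j, (w i)⁻¹ := fun j hj =>
    sum_pos (fun i hi => inv_pos.2 (hw i (mem_filter.1 hi).1))
      ⟨j, mem_filter.2 ⟨(mem_filter.1 hj).1, le_rfl⟩⟩
  have hsum := sum_filter_le_div_sqrt_le s (fun j hj => (inv_pos.2 (hw j hj)).le) x
  refine (sum_sq_le_sum_mul_sum_of_sq_le_mul _ (fun j hj => ?_) (fun j hj => ?_)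
    fun j hj => ?_).trans (mul_le_mul_of_nonneg_left hsum (sum_nonneg fun j hj => ?_))
  case refine_3 =>
    have hφ := Real.sqrt_pos.2 (hφ_pos j hj)
    generalize √(∑ i ∈ s with i ≤ j, (w i)⁻¹) = r at hφ ⊢
    have := hw' j hj
    exact le_of_eq (by field_simp)
  all_goals
    have := hw' j hj
    positivity

lemma mul_sq_sum_filter_le (s : Finset ι) {p w : ι → ℝ} (hp : ∀ i ∈ s, 0 ≤ p i)
    (hw : ∀ i ∈ s, 0 < w i) {B : ℝ} {x : ι} (hx : x ∈ s)
    (hB : (∑ j ∈ s with j ≤ x, (w j)⁻¹) * ∑ i ∈ s with x ≤ i, p i ≤ B) (δ : ι → ℝ) :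
    p x * (∑ j ∈ s with j ≤ x, δ j) ^ 2 ≤
      2 * √B * (∑ j ∈ s with j ≤ x, w j * √(∑ i ∈ s with i ≤ j, (w i)⁻¹) * δ j ^ 2) *
        (p x / √(∑ i ∈ s with x ≤ i, p i)) := by
  have hsq := sq_sum_filter_le_sum_mul_sqrt s hw δ x
  set φ := ∑ j ∈ s with j ≤ x, (w j)⁻¹
  set P := ∑ i ∈ s with x ≤ i, p i
  set Q := ∑ j ∈ s with j ≤ x, w j * √(∑ i ∈ s with i ≤ j, (w i)⁻¹) * δ j ^ 2
  have hQ : 0 ≤ Q := sum_nonneg fun j hj => by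
    have := hw j (mem_filter.1 hj).1
    positivity
  have hφP : √φ * √P ≤ √B := by
    rw [← Real.sqrt_mul (sum_nonneg fun j hj => (inv_pos.2 (hw j (mem_filter.1 hj).1)).le)]
    exact Real.sqrt_le_sqrt hB
  have hpx := hp x hx
  have hp_zero : √P = 0 → p x = 0 := fun h =>
    le_antisymm ((single_le_sum (fun i hi => hp i (mem_filter.1 hi).1)
      (mem_filter.2 ⟨hx, le_rfl⟩)).trans (Real.sqrt_eq_zero'.1 h)) hpx
  calc p x * (∑ j ∈ s with j ≤ x, δ j) ^ 2 ≤ p x * (Q * (2 * √φ)) := by gcongr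
    _ = 2 * Q * (p x / √P) * (√φ * √P) := by
        nth_rw 1 [← div_mul_cancel_of_imp hp_zero]
        ring
    _ ≤ 2 * Q * (p x / √P) * √B := by gcongr
    _ = 2 * √B * Q * (p x / √P) := by ring

/-- The discrete Hardy inequality with Muckenhoupt's constant `B`. -/
theorem sum_mul_sq_sum_filter_le (s : Finset ι) {p w : ι → ℝ} (hp : ∀ i ∈ s, 0 ≤ p i)
    (hw : ∀ i ∈ s, 0 < w i) {B : ℝ}
    (hB : ∀ k ∈ s, (∑ j ∈ s with j ≤ k, (w j)⁻¹) * ∑ i ∈ s with k ≤ i, p i ≤ B) (δ : ι → ℝ) :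
    ∑ x ∈ s, p x * (∑ j ∈ s with j ≤ x, δ j) ^ 2 ≤ 4 * B * ∑ j ∈ s, w j * δ j ^ 2 := by
  set φ : ι → ℝ := fun k => ∑ j ∈ s with j ≤ k, (w j)⁻¹
  set P : ι → ℝ := fun k => ∑ i ∈ s with k ≤ i, p i
  have hφ_nonneg : ∀ k, 0 ≤ φ k := fun k =>
    sum_nonneg fun j hj => (inv_pos.2 (hw j (mem_filter.1 hj).1)).le
  have hP_nonneg : ∀ k, 0 ≤ P k := fun k => sum_nonneg fun i hi => hp i (mem_filter.1 hi).1
  calc _ ≤ ∑ x ∈ s, 2 * √B * (∑ j ∈ s with j ≤ x, w j * √(φ j) * δ j ^ 2) * (p x / √(P x)) :=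
        sum_le_sum fun x hx => mul_sq_sum_filter_le s hp hw hx (hB x hx) δ
    _ = ∑ j ∈ s, 2 * √B * (w j * √(φ j) * δ j ^ 2) * ∑ x ∈ s with j ≤ x, p x / √(P x) := by
        simp only [mul_sum, sum_mul]
        exact sum_comm' fun x j => by simp only [mem_filter]; tauto
    _ ≤ ∑ j ∈ s, 4 * B * (w j * δ j ^ 2) := sum_le_sum fun j hj => by
        have hwj := hw j hj
        calc _ ≤ 2 * √B * (w j * √(φ j) * δ j ^ 2) * (2 * √(P j)) := by
              gcongr; exact sum_filter_ge_div_sqrt_le s hp j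
          _ = 4 * √B * (w j * δ j ^ 2) * √(φ j * P j) := by
              rw [Real.sqrt_mul (hφ_nonneg j)]; ring
          _ ≤ 4 * √B * (w j * δ j ^ 2) * √B := by gcongr; exact hB j hj
          _ = 4 * (√B * √B) * (w j * δ j ^ 2) := by ring
          _ = _ := by
              rw [Real.mul_self_sqrt ((mul_nonneg (hφ_nonneg j) (hP_nonneg j)).trans (hB j hj))]
    _ = _ := by rw [mul_sum]

end Hardy

section Variational

open scoped Matrix

lemma mul_norm_sq_le_inner_of_forall_hasEigenvector {E : Type*} [NormedAddCommGroup E]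
    [InnerProductSpace ℝ E] [FiniteDimensional ℝ E] {T : E →ₗ[ℝ] E} (hT : T.IsSymmetric)
    {γ : ℝ} {x : E} (h : ∀ μ < γ, ∀ v, Module.End.HasEigenvector T μ v → inner ℝ x v = 0) :
    γ * ‖x‖ ^ 2 ≤ inner ℝ (T x) x := by
  set b := hT.eigenvectorBasis rfl
  rw [← real_inner_self_eq_norm_sq, ← b.sum_inner_mul_inner, ← b.sum_inner_mul_inner, mul_sum]
  refine sum_le_sum fun i _ => ?_
  rw [hT x, hT.apply_eigenvectorBasis, RCLike.ofReal_real_eq_id, id, inner_smul_right,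
    real_inner_comm (b i) x, mul_assoc]
  obtain hμ | hμ := lt_or_ge (hT.eigenvalues rfl i) γ
  · simp [real_inner_comm x, b, h _ hμ _ (hT.hasEigenvector_eigenvectorBasis rfl i)]
  · exact mul_le_mul_of_nonneg_right hμ (mul_self_nonneg _)

lemma core_mul_inner_self_le_of_forall_hasEigenvector {E : Type*} [AddCommGroup E] [Module ℝ E]
    [FiniteDimensional ℝ E] (core : InnerProductSpace.Core ℝ E) {T : E →ₗ[ℝ] E}
    (hT : ∀ u v, core.inner (T u) v = core.inner (T v) u) {γ : ℝ} {x : E}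
    (h : ∀ μ < γ, ∀ v, Module.End.HasEigenvector T μ v → core.inner x v = 0) :
    γ * core.inner x x ≤ core.inner (T x) x := by
  let := core.toNormedAddCommGroup
  let := InnerProductSpace.ofCore core.toCore
  have := mul_norm_sq_le_inner_of_forall_hasEigenvector (T := T)
    (fun u v => (hT u v).trans (real_inner_comm _ _)) h
  rwa [← real_inner_self_eq_norm_sq] at this

/-- The weighted space `ℓ²(q)` on a finite type. -/
abbrev weightedInnerCore {V : Type*} [Fintype V] (q : V → ℝ) (hq : ∀ i, 0 < q i) :
    InnerProductSpace.Core ℝ (V → ℝ) where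
  inner u v := ∑ i, q i * (v i * u i)
  conj_inner_symm u v := by simp only [conj_trivial, mul_comm (u _)]
  re_inner_nonneg u := sum_nonneg fun i _ => mul_nonneg (hq i).le (mul_self_nonneg _)
  definite u hu := funext fun i => mul_self_eq_zero.1 <|
    (mul_eq_zero.1 ((sum_eq_zero_iff_of_nonneg fun i _ =>
      mul_nonneg (hq i).le (mul_self_nonneg _)).1 hu i (mem_univ i))).resolve_left (hq i).ne'
  add_left u v w := by simp only [Pi.add_apply, mul_add, sum_add_distrib]
  smul_left u v r := by
    simp only [Pi.smul_apply, smul_eq_mul, conj_trivial, mul_sum]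
    exact sum_congr rfl fun i _ => by ring

/-- The Dirichlet form `⟨u, (1 - K) v⟩` of a matrix `K` in the weighted space `ℓ²(q)`. The
weight `q` need not be normalised. -/
def dirichletForm {V : Type*} [Fintype V] [DecidableEq V] (q : V → ℝ) (K : Matrix V V ℝ)
    (u v : V → ℝ) : ℝ :=
  ∑ i, q i * (u i * ((1 - K) *ᵥ v) i)

lemma sum_mul_sq_le_sum_mul_sub_sq {V : Type*} [Fintype V] {q f : V → ℝ} (hq : ∀ i, 0 ≤ q i)
    (hf : ∑ i, q i * f i = 0) (c : ℝ) :
    ∑ i, q i * f i ^ 2 ≤ ∑ i, q i * (f i - c) ^ 2 := by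
  have hexpand : ∑ i, q i * (f i - c) ^ 2 =
      ∑ i, q i * f i ^ 2 - 2 * c * ∑ i, q i * f i + c ^ 2 * ∑ i, q i := by
    simp only [mul_sum, ← sum_sub_distrib, ← sum_add_distrib]
    exact sum_congr rfl fun i _ => by ring
  rw [hexpand, hf]
  linarith [mul_nonneg (sq_nonneg c) (sum_nonneg (s := univ) fun i _ => hq i)]

namespace IsGapOf

variable {m : ℕ} {K : Matrix (Fin (m + 1)) (Fin (m + 1)) ℝ} {γ : ℝ} {q : Fin (m + 1) → ℝ}

theorem mul_sum_mul_sq_le_dirichletForm (hγ : IsGapOf K γ) (hq : ∀ i, 0 < q i)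
    (hsymm : ∀ u v, dirichletForm q K u v = dirichletForm q K v u)
    (hker : ∀ v, (1 - K) *ᵥ v = 0 → ∃ c, v = fun _ => c)
    {f : Fin (m + 1) → ℝ} (hf : ∑ i, q i * f i = 0) :
    γ * ∑ i, q i * f i ^ 2 ≤ dirichletForm q K f f := by
  have hbound := core_mul_inner_self_le_of_forall_hasEigenvector (weightedInnerCore q hq)
    (T := (1 - K).mulVecLin) (fun u v => hsymm v u) (γ := γ) (x := f) fun μ hμ v hv => by
    have hv_eq : (1 - K) *ᵥ v = μ • v := hv.apply_eq_smul
    have hμ0 : μ = 0 := by_contra fun h => (hγ.2 ⟨h, v, hv.2, hv_eq⟩).not_gt hμ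
    obtain ⟨c, rfl⟩ := hker v (by rw [hv_eq, hμ0, zero_smul])
    change ∑ i, q i * (c * f i) = 0
    simp only [mul_left_comm _ c, ← mul_sum, hf, mul_zero]
  simp only [sq]
  exact hbound

theorem le_of_poincare (hγ : IsGapOf K γ) (hq : ∀ i, 0 < q i)
    (hone : ∀ v, dirichletForm q K 1 v = 0) {c : ℝ}
    (hc : ∀ v : Fin (m + 1) → ℝ, ∑ i, q i * v i = 0 →
      c * ∑ i, q i * v i ^ 2 ≤ dirichletForm q K v v) : c ≤ γ := by
  obtain ⟨hγ0, v, hv0, hv⟩ := hγ.1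
  have hform : ∀ u, dirichletForm q K u v = γ * ∑ i, q i * (u i * v i) := fun u => by
    rw [dirichletForm, hv, mul_sum]
    exact sum_congr rfl fun i _ => by rw [Pi.smul_apply, smul_eq_mul]; ring
  have hmean : ∑ i, q i * v i = 0 := by
    simpa [hform, hγ0] using hone v
  obtain ⟨j, hj⟩ := Function.ne_iff.1 hv0
  have hnorm : 0 < ∑ i, q i * v i ^ 2 :=
    sum_pos' (fun i _ => mul_nonneg (hq i).le (sq_nonneg _))
      ⟨j, mem_univ j, mul_pos (hq j) (sq_pos_of_ne_zero hj)⟩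
  refine le_of_mul_le_mul_right ((hc v hmean).trans_eq ?_) hnorm
  simp only [hform, sq]

end IsGapOf

end Variational

section SymmetricBirthDeath

open scoped Matrix

/-- The state in `{-n, …, n}` carried by an index of the `2n + 1` states. -/
def site (n : ℕ) (i : Fin (2 * n + 1)) : ℤ :=
  (i : ℤ) - n

/-- The restriction of a kernel on `ℤ` to `{-n, …, n}`, as a matrix indexed through `site`. -/
def siteMatrix (n : ℕ) (κ : ℤ → ℤ → ℝ) : Matrix (Fin (2 * n + 1)) (Fin (2 * n + 1)) ℝ :=
  Matrix.of fun i j => κ (site n i) (site n j)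

/-- The reversible weight on `{-n, …, n}` giving mass `p d` to each of `d` and `-d`. -/
def siteWeight (n : ℕ) (p : ℕ → ℝ) (i : Fin (2 * n + 1)) : ℝ :=
  p (site n i).natAbs

/-- `1 - κ` on functions on `{-n, …, n}`; values of `f` outside this interval are ignored. -/
noncomputable def laplacian (n : ℕ) (κ : ℤ → ℤ → ℝ) (f : ℤ → ℝ) (x : ℤ) : ℝ :=
  f x - ∑ y ∈ Icc (-n : ℤ) n, κ x y * f y

/-- The energy of the edges `{d - 1, d}`, `1 ≤ d ≤ n`, of conductances `w d`: the part of the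
Dirichlet form coming from the positive half-line. -/
def halfEnergy (n : ℕ) (w : ℕ → ℝ) (u v : ℤ → ℝ) : ℝ :=
  ∑ d ∈ Icc 1 n, w d * ((u d - u (d - 1)) * (v d - v (d - 1)))

/-- `κ` is a nearest-neighbour chain on `{-n, …, n}`, invariant under `x ↦ -x` and reversible
with respect to the weight `p |x|`; the edge `{d - 1, d}` has conductance `w d`. -/
structure IsSymmBirthDeath (n : ℕ) (κ : ℤ → ℤ → ℝ) (p w : ℕ → ℝ) : Prop where
  apply_neg_neg : ∀ x y, κ (-x) (-y) = κ x y
  mul_apply_add_one : ∀ d : ℕ, d ≤ n → p d * κ d (d + 1) = w (d + 1)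
  mul_apply_sub_one : ∀ d : ℕ, 1 ≤ d → d ≤ n → p d * κ d (d - 1) = w d
  row_sum : ∀ d : ℕ, d ≤ n → κ d (d - 1) + κ d d + κ d (d + 1) = 1
  apply_eq_zero : ∀ (d : ℕ) (y : ℤ), d ≤ n → y ∉ Icc (d - 1 : ℤ) (d + 1) → κ d y = 0
  weight_pos : ∀ d ≤ n, 0 < p d
  conductance_pos : ∀ d, 1 ≤ d → d ≤ n → 0 < w d
  conductance_add_one : w (n + 1) = 0

lemma sum_Icc_neg_natCast (n : ℕ) (F : ℤ → ℝ) :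
    ∑ x ∈ Icc (-n : ℤ) n, F x = F 0 + ∑ d ∈ Icc 1 n, (F d + F (-d)) := by
  induction n with
  | zero => simp
  | succ n ih =>
    rw [sum_Icc_succ_top (by lia), ← add_assoc, ← ih, Nat.cast_succ, add_comm (∑ x ∈ _, F x)]
    exact sum_Icc_succ_eq_add_endpoints F

lemma site_injective (n : ℕ) : Function.Injective (site n) := fun i j h =>
  Fin.ext (by unfold site at h; lia)

lemma sum_site (n : ℕ) (F : ℤ → ℝ) : ∑ i, F (site n i) = ∑ x ∈ Icc (-n : ℤ) n, F x :=
  sum_nbij (site n) (fun i _ => mem_Icc.2 (by have := i.is_lt; unfold site; lia))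
    (site_injective n).injOn (fun x hx => by
      obtain ⟨hx, hx'⟩ := mem_Icc.1 hx
      exact ⟨⟨(x + n).toNat, by lia⟩, mem_coe.2 (mem_univ _), by simp only [site]; lia⟩)
    fun _ _ => rfl

lemma exists_comp_site (n : ℕ) (v : Fin (2 * n + 1) → ℝ) : ∃ f : ℤ → ℝ, f ∘ site n = v :=
  ⟨Function.extend (site n) v 0, funext ((site_injective n).extend_apply v 0)⟩

lemma sum_siteWeight_mul (n : ℕ) (p : ℕ → ℝ) (F : ℤ → ℝ) :
    ∑ i, siteWeight n p i * F (site n i) =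
      p 0 * F 0 + (∑ d ∈ Icc 1 n, p d * F d + ∑ d ∈ Icc 1 n, p d * F (-d)) := by
  simp only [siteWeight]
  rw [sum_site n fun x => p x.natAbs * F x, sum_Icc_neg_natCast, sum_add_distrib]
  simp only [Int.natAbs_zero, Int.natAbs_neg, Int.natAbs_natCast]

lemma one_sub_siteMatrix_mulVec (n : ℕ) (κ : ℤ → ℤ → ℝ) (f : ℤ → ℝ) (i : Fin (2 * n + 1)) :
    ((1 - siteMatrix n κ) *ᵥ (f ∘ site n)) i = laplacian n κ f (site n i) := by
  rw [Matrix.sub_mulVec, Matrix.one_mulVec, Pi.sub_apply, laplacian,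
    ← sum_site n fun y => κ (site n i) y * f y]
  rfl

lemma dirichletForm_comp_site (n : ℕ) (κ : ℤ → ℤ → ℝ) (p : ℕ → ℝ) (u v : ℤ → ℝ) :
    dirichletForm (siteWeight n p) (siteMatrix n κ) (u ∘ site n) (v ∘ site n) =
      p 0 * (u 0 * laplacian n κ v 0) + (∑ d ∈ Icc 1 n, p d * (u d * laplacian n κ v d) +
        ∑ d ∈ Icc 1 n, p d * (u (-d) * laplacian n κ v (-d))) := by
  rw [← sum_siteWeight_mul n p fun x => u x * laplacian n κ v x, dirichletForm]
  simp only [one_sub_siteMatrix_mulVec, Function.comp_apply]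

lemma sum_Icc_mul_flux (n : ℕ) (w : ℕ → ℝ) (u v : ℤ → ℝ) :
    ∑ d ∈ Icc 1 n, u d * (w d * (v d - v (d - 1)) + w (d + 1) * (v d - v (d + 1))) =
      halfEnergy n w u v + w 1 * (u 0 * (v 1 - v 0)) - w (n + 1) * (u n * (v (n + 1) - v n)) := by
  unfold halfEnergy
  induction n with
  | zero => simp
  | succ n ih =>
    rw [sum_Icc_succ_top (by lia), sum_Icc_succ_top (by lia), ih]
    push_cast
    rw [add_sub_cancel_right]
    ring

lemma sum_Icc_sub_pred (f : ℤ → ℝ) (d : ℕ) :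
    ∑ j ∈ Icc 1 d, (f j - f (j - 1)) = f d - f 0 := by
  induction d with
  | zero => simp
  | succ d ih =>
    rw [sum_Icc_succ_top (by lia), ih]
    push_cast
    rw [add_sub_cancel_right]
    ring

lemma sum_mul_sq_sub_sum_Icc_min {n r : ℕ} (hrn : r ≤ n) {w : ℕ → ℝ}
    (hw : ∀ j ∈ Icc 1 r, w j ≠ 0) :
    ∑ d ∈ Icc 1 n, w d * (∑ j ∈ Icc 1 (min d r), (w j)⁻¹ -
      ∑ j ∈ Icc 1 (min (d - 1) r), (w j)⁻¹) ^ 2 = ∑ j ∈ Icc 1 r, (w j)⁻¹ := by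
  have hincr : ∀ d ∈ Icc 1 n, w d * (∑ j ∈ Icc 1 (min d r), (w j)⁻¹ -
      ∑ j ∈ Icc 1 (min (d - 1) r), (w j)⁻¹) ^ 2 = if d ≤ r then (w d)⁻¹ else 0 := fun d hd => by
    obtain ⟨e, rfl⟩ := Nat.exists_eq_add_of_le' (mem_Icc.1 hd).1
    rw [Nat.add_sub_cancel]
    split_ifs with her
    · have hwe := hw (e + 1) (mem_Icc.2 ⟨by lia, her⟩)
      rw [min_eq_left her, min_eq_left (by lia), sum_Icc_succ_top (by lia), add_sub_cancel_left]
      field_simp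
    · rw [min_eq_right (by lia), min_eq_right (by lia), sub_self, zero_pow two_ne_zero, mul_zero]
  rw [sum_congr rfl hincr, ← sum_filter]
  exact sum_congr (by ext; simp only [mem_filter, mem_Icc]; lia) fun _ _ => rfl

namespace IsSymmBirthDeath

variable {n : ℕ} {κ : ℤ → ℤ → ℝ} {p w : ℕ → ℝ}

lemma laplacian_neg (h : IsSymmBirthDeath n κ p w) (f : ℤ → ℝ) (x : ℤ) :
    laplacian n κ f (-x) = laplacian n κ (fun y => f (-y)) x := by
  unfold laplacian
  congr 1
  refine sum_equiv (Equiv.neg ℤ) (fun y => by simp only [mem_Icc, Equiv.neg_apply]; lia)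
    fun y _ => ?_
  simp only [Equiv.neg_apply, neg_neg, ← h.apply_neg_neg (-x) y]

lemma sum_apply_mul (h : IsSymmBirthDeath n κ p w) (f : ℤ → ℝ) {d : ℕ} (hd : d ≤ n) :
    ∑ y ∈ Icc (-n : ℤ) n, κ d y * f y =
      κ d (d - 1) * f (d - 1) + κ d d * f d + κ d (d + 1) * f (d + 1) := by
  have hsub : ∑ y ∈ Icc (d - 1 : ℤ) (d + 1), κ d y * f y =
      κ d (d - 1) * f (d - 1) + κ d d * f d + κ d (d + 1) * f (d + 1) := by
    rw [show Icc (d - 1 : ℤ) (d + 1) = {(d - 1 : ℤ), (d : ℤ), (d + 1 : ℤ)} by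
      ext; simp only [mem_Icc, mem_insert, mem_singleton]; lia]
    rw [sum_insert (by simp; lia), sum_insert (by simp), sum_singleton, add_assoc]
  rw [← hsub]
  have hend : κ n (n + 1) = 0 := (mul_eq_zero.1 <|
    (h.mul_apply_add_one n le_rfl).trans h.conductance_add_one).resolve_left
      (h.weight_pos n le_rfl).ne'
  refine sum_congr_of_eq_on_inter (fun y _ hy => ?_) (fun y hy hyn => ?_) fun _ _ _ => rfl
  · rw [h.apply_eq_zero d y hd hy, zero_mul]
  · simp only [mem_Icc] at hy hyn
    obtain ⟨rfl, rfl⟩ | ⟨rfl, rfl, rfl⟩ : d = n ∧ y = n + 1 ∨ n = 0 ∧ d = 0 ∧ y = -1 := by lia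
    · rw [hend, zero_mul]
    · have hrefl := h.apply_neg_neg 0 1
      rw [neg_zero] at hrefl
      exact mul_eq_zero_of_left (hrefl.trans hend) _

lemma laplacian_natCast (h : IsSymmBirthDeath n κ p w) (f : ℤ → ℝ) {d : ℕ} (hd : d ≤ n) :
    laplacian n κ f d = κ d (d - 1) * (f d - f (d - 1)) + κ d (d + 1) * (f d - f (d + 1)) := by
  rw [laplacian, h.sum_apply_mul f hd]
  linear_combination -f d * h.row_sum d hd

lemma sum_mul_laplacian (h : IsSymmBirthDeath n κ p w) (u v : ℤ → ℝ) :
    ∑ d ∈ Icc 1 n, p d * (u d * laplacian n κ v d) =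
      halfEnergy n w u v + w 1 * (u 0 * (v 1 - v 0)) := by
  rw [← sub_zero (_ + _), ← zero_mul (u n * (v (n + 1) - v n)), ← h.conductance_add_one,
    ← sum_Icc_mul_flux]
  refine sum_congr rfl fun d hd => ?_
  obtain ⟨hd1, hdn⟩ := mem_Icc.1 hd
  rw [h.laplacian_natCast v hdn, ← h.mul_apply_sub_one d hd1 hdn, ← h.mul_apply_add_one d hdn]
  ring

theorem dirichletForm_eq (h : IsSymmBirthDeath n κ p w) (u v : ℤ → ℝ) :
    dirichletForm (siteWeight n p) (siteMatrix n κ) (u ∘ site n) (v ∘ site n) =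
      halfEnergy n w u v + halfEnergy n w (fun x => u (-x)) fun x => v (-x) := by
  have hcentre := h.laplacian_natCast v (Nat.zero_le n)
  have hedge := h.mul_apply_add_one 0 (Nat.zero_le n)
  have hrefl := h.apply_neg_neg 0 1
  simp only [Nat.cast_zero, zero_sub, zero_add, neg_zero] at hcentre hedge hrefl
  rw [dirichletForm_comp_site, sum_mul_laplacian h, hcentre, hrefl, ← hedge]
  simp only [h.laplacian_neg]
  rw [sum_mul_laplacian h (fun x => u (-x)), ← hedge]
  simp only [neg_zero]
  ring

lemma siteWeight_pos (h : IsSymmBirthDeath n κ p w) (i : Fin (2 * n + 1)) :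
    0 < siteWeight n p i :=
  h.weight_pos _ (by have := i.is_lt; unfold site; lia)

lemma halfEnergy_self_nonneg (h : IsSymmBirthDeath n κ p w) (f : ℤ → ℝ) :
    0 ≤ halfEnergy n w f f :=
  sum_nonneg fun d hd => mul_nonneg
    (h.conductance_pos d (mem_Icc.1 hd).1 (mem_Icc.1 hd).2).le (mul_self_nonneg _)

lemma dirichletForm_comm (h : IsSymmBirthDeath n κ p w) (u v : Fin (2 * n + 1) → ℝ) :
    dirichletForm (siteWeight n p) (siteMatrix n κ) u v =
      dirichletForm (siteWeight n p) (siteMatrix n κ) v u := by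
  obtain ⟨u, rfl⟩ := exists_comp_site n u
  obtain ⟨v, rfl⟩ := exists_comp_site n v
  simp only [h.dirichletForm_eq, halfEnergy, mul_comm (u _ - _)]

lemma dirichletForm_one_left (h : IsSymmBirthDeath n κ p w) (v : Fin (2 * n + 1) → ℝ) :
    dirichletForm (siteWeight n p) (siteMatrix n κ) 1 v = 0 := by
  obtain ⟨v, rfl⟩ := exists_comp_site n v
  have := h.dirichletForm_eq 1 v
  simpa [halfEnergy] using this

lemma dirichletForm_self_nonneg (h : IsSymmBirthDeath n κ p w) (v : Fin (2 * n + 1) → ℝ) :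
    0 ≤ dirichletForm (siteWeight n p) (siteMatrix n κ) v v := by
  obtain ⟨f, rfl⟩ := exists_comp_site n v
  rw [h.dirichletForm_eq]
  exact add_nonneg (h.halfEnergy_self_nonneg f) (h.halfEnergy_self_nonneg _)

lemma eq_apply_zero_of_halfEnergy_eq_zero (h : IsSymmBirthDeath n κ p w) {f : ℤ → ℝ}
    (hf : halfEnergy n w f f = 0) {d : ℕ} (hd : d ≤ n) : f d = f 0 := by
  rw [← sub_eq_zero, ← sum_Icc_sub_pred]
  refine sum_eq_zero fun j hj => ?_
  have hj1 := (mem_Icc.1 hj).1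
  have hjn := (mem_Icc.1 hj).2.trans hd
  have hterm := (sum_eq_zero_iff_of_nonneg fun d hd => mul_nonneg
    (h.conductance_pos d (mem_Icc.1 hd).1 (mem_Icc.1 hd).2).le (mul_self_nonneg _)).1 hf j
      (mem_Icc.2 ⟨hj1, hjn⟩)
  exact mul_self_eq_zero.1 ((mul_eq_zero.1 hterm).resolve_left (h.conductance_pos j hj1 hjn).ne')

open scoped Matrix in
lemma exists_eq_const_of_mulVec_eq_zero (h : IsSymmBirthDeath n κ p w)
    (v : Fin (2 * n + 1) → ℝ) (hv : (1 - siteMatrix n κ) *ᵥ v = 0) : ∃ c, v = fun _ => c := by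
  obtain ⟨f, rfl⟩ := exists_comp_site n v
  have hform : halfEnergy n w f f + halfEnergy n w (fun x => f (-x)) (fun x => f (-x)) = 0 := by
    simp [← h.dirichletForm_eq, dirichletForm, hv]
  obtain ⟨hpos, hneg⟩ := (add_eq_zero_iff_of_nonneg (h.halfEnergy_self_nonneg f)
    (h.halfEnergy_self_nonneg _)).1 hform
  refine ⟨f 0, funext fun i => ?_⟩
  have hi : (site n i).natAbs ≤ n := by have := i.is_lt; unfold site; lia
  obtain hs | hs := (site n i).natAbs_eq <;> rw [Function.comp_apply, hs]
  · exact h.eq_apply_zero_of_halfEnergy_eq_zero hpos hi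
  · exact h.eq_apply_zero_of_halfEnergy_eq_zero hneg hi

lemma sum_mul_sub_sq_le (h : IsSymmBirthDeath n κ p w) {B : ℝ}
    (hB : ∀ r, 1 ≤ r → r ≤ n → (∑ j ∈ Icc 1 r, (w j)⁻¹) * ∑ d ∈ Icc r n, p d ≤ B) (f : ℤ → ℝ) :
    ∑ d ∈ Icc 1 n, p d * (f d - f 0) ^ 2 ≤ 4 * B * halfEnergy n w f f := by
  have hle : ∀ r ≤ n, {j ∈ Icc 1 n | j ≤ r} = Icc 1 r := fun r hr => by
    ext; simp only [mem_filter, mem_Icc]; lia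
  have hge : ∀ r, 1 ≤ r → {j ∈ Icc 1 n | r ≤ j} = Icc r n := fun r hr => by
    ext; simp only [mem_filter, mem_Icc]; lia
  have hardy := sum_mul_sq_sum_filter_le (Icc 1 n) (p := p) (w := w) (B := B)
    (fun d hd => (h.weight_pos d (mem_Icc.1 hd).2).le)
    (fun d hd => h.conductance_pos d (mem_Icc.1 hd).1 (mem_Icc.1 hd).2)
    (fun r hr => by
      obtain ⟨hr1, hrn⟩ := mem_Icc.1 hr
      rw [hle r hrn, hge r hr1]
      exact hB r hr1 hrn) fun j => f j - f (j - 1)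
  simp only [sq, halfEnergy] at hardy ⊢
  refine le_of_eq_of_le (sum_congr rfl fun d hd => ?_) hardy
  rw [hle d (mem_Icc.1 hd).2, sum_Icc_sub_pred]

theorem one_div_le_gap (h : IsSymmBirthDeath n κ p w) {γ : ℝ}
    (hγ : IsGapOf (siteMatrix n κ) γ) {B : ℝ} (hB_pos : 0 < B)
    (hB : ∀ r, 1 ≤ r → r ≤ n → (∑ j ∈ Icc 1 r, (w j)⁻¹) * ∑ d ∈ Icc r n, p d ≤ B) :
    1 / (4 * B) ≤ γ := by
  refine hγ.le_of_poincare h.siteWeight_pos h.dirichletForm_one_left fun v hv => ?_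
  obtain ⟨f, rfl⟩ := exists_comp_site n v
  rw [one_div, inv_mul_le_iff₀ (by positivity), h.dirichletForm_eq, mul_add]
  -- The mean minimises the mean square deviation, so it may be replaced by the value at the origin,
  -- from which the two half-lines are independent.
  calc _ ≤ ∑ i, siteWeight n p i * (f (site n i) - f 0) ^ 2 :=
        sum_mul_sq_le_sum_mul_sub_sq (fun i => (h.siteWeight_pos i).le) hv (f 0)
    _ = ∑ d ∈ Icc 1 n, p d * (f d - f 0) ^ 2 + ∑ d ∈ Icc 1 n, p d * (f (-d) - f 0) ^ 2 := by
        rw [sum_siteWeight_mul n p fun x => (f x - f 0) ^ 2]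
        ring
    _ ≤ _ := add_le_add (h.sum_mul_sub_sq_le hB f)
        (by simpa only [neg_zero] using h.sum_mul_sub_sq_le hB fun x => f (-x))

lemma gap_mul_sum_mul_sq_le (h : IsSymmBirthDeath n κ p w) {γ : ℝ}
    (hγ : IsGapOf (siteMatrix n κ) γ) {g : ℕ → ℝ} (hg : g 0 = 0) :
    γ * ∑ d ∈ Icc 1 n, p d * g d ^ 2 ≤ ∑ d ∈ Icc 1 n, w d * (g d - g (d - 1)) ^ 2 := by
  set f : ℤ → ℝ := fun x => x.sign * g x.natAbs with hf
  have hf_odd : ∀ x, f (-x) = -f x := fun x => by simp [hf]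
  have hf_nat : ∀ d : ℕ, f d = g d := fun d => by
    obtain rfl | hd := d.eq_zero_or_pos
    · simp [hf, hg]
    · simp [hf, Int.sign_natCast_of_ne_zero hd.ne']
  have hf_zero : f 0 = 0 := by simp [hf]
  have hmean : ∑ i, siteWeight n p i * (f ∘ site n) i = 0 := by
    simp only [Function.comp_apply, sum_siteWeight_mul, hf_odd, mul_neg, sum_neg_distrib,
      add_neg_cancel, hf_zero, mul_zero, add_zero]
  have henergy : halfEnergy n w f f = ∑ d ∈ Icc 1 n, w d * (g d - g (d - 1)) ^ 2 :=
    sum_congr rfl fun d hd => by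
      have hd1 := (mem_Icc.1 hd).1
      rw [sq, ← hf_nat, ← hf_nat, Nat.cast_pred hd1]
  have hbound := hγ.mul_sum_mul_sq_le_dirichletForm h.siteWeight_pos h.dirichletForm_comm
    h.exists_eq_const_of_mulVec_eq_zero hmean
  have henergy_neg : halfEnergy n w (fun x => f (-x)) (fun x => f (-x)) = halfEnergy n w f f :=
    sum_congr rfl fun d _ => by simp only [hf_odd]; ring
  rw [h.dirichletForm_eq, henergy_neg, henergy] at hbound
  simp only [Function.comp_apply, sum_siteWeight_mul n p fun x => f x ^ 2, hf_odd, neg_sq,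
    hf_nat, hf_zero] at hbound
  linarith

lemma gap_nonneg (h : IsSymmBirthDeath n κ p w) {γ : ℝ} (hγ : IsGapOf (siteMatrix n κ) γ) :
    0 ≤ γ :=
  hγ.le_of_poincare h.siteWeight_pos h.dirichletForm_one_left fun v _ => by
    rw [zero_mul]
    exact h.dirichletForm_self_nonneg v

theorem gap_mul_le_one (h : IsSymmBirthDeath n κ p w) {γ : ℝ}
    (hγ : IsGapOf (siteMatrix n κ) γ) {r : ℕ} (hr : 1 ≤ r) (hrn : r ≤ n) :
    γ * ((∑ j ∈ Icc 1 r, (w j)⁻¹) * ∑ d ∈ Icc r n, p d) ≤ 1 := by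
  set g : ℕ → ℝ := fun d => ∑ j ∈ Icc 1 (min d r), (w j)⁻¹
  have hw_pos : ∀ j ∈ Icc 1 r, 0 < w j := fun j hj =>
    h.conductance_pos j (mem_Icc.1 hj).1 ((mem_Icc.1 hj).2.trans hrn)
  have hg_ge : ∀ d, r ≤ d → g d = ∑ j ∈ Icc 1 r, (w j)⁻¹ := fun d hd => by
    simp only [g, min_eq_right hd]
  have hg_pos : 0 < g r :=
    hg_ge r le_rfl ▸ sum_pos (fun j hj => inv_pos.2 (hw_pos j hj)) (nonempty_Icc.2 hr)
  have henergy : ∑ d ∈ Icc 1 n, w d * (g d - g (d - 1)) ^ 2 = g r :=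
    (sum_mul_sq_sub_sum_Icc_min hrn fun j hj => (hw_pos j hj).ne').trans (hg_ge r le_rfl).symm
  have hmass : g r ^ 2 * ∑ d ∈ Icc r n, p d ≤ ∑ d ∈ Icc 1 n, p d * g d ^ 2 := by
    rw [mul_sum]
    calc _ = ∑ d ∈ Icc r n, p d * g d ^ 2 := sum_congr rfl fun d hd => by
          rw [hg_ge d (mem_Icc.1 hd).1, hg_ge r le_rfl, mul_comm]
      _ ≤ _ := sum_le_sum_of_subset_of_nonneg (Icc_subset_Icc_left hr) fun d hd _ =>
          mul_nonneg (h.weight_pos d (mem_Icc.1 hd).2).le (sq_nonneg _)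
  rw [← hg_ge r le_rfl]
  have hbound := h.gap_mul_sum_mul_sq_le hγ (g := g) (by simp [g])
  refine le_of_mul_le_mul_right ?_ hg_pos
  linarith [mul_le_mul_of_nonneg_left hmass (h.gap_nonneg hγ)]

end IsSymmBirthDeath

end SymmetricBirthDeath

section Kernels

lemma ite_nonneg_neg_neg {κ : ℤ → ℤ → ℝ} (h : ∀ y, κ 0 (-y) = κ 0 y) (x y : ℤ) :
    (if 0 ≤ -x then κ (-x) (-y) else κ (-(-x)) (-(-y))) =
      if 0 ≤ x then κ x y else κ (-x) (-y) := by
  obtain hx | rfl | hx := lt_trichotomy x 0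
  · rw [if_pos (by lia), if_neg (by lia)]
  · simp [h]
  · rw [if_neg (by lia), if_pos (by lia), neg_neg, neg_neg]

variable {n d : ℕ} {a : ℝ}

lemma checkK_add_one (hd : d < n) : checkK n a d (d + 1) = 1 / 2 := by
  rw [checkK, if_pos (by lia), checkKpos, if_pos (by lia)]

lemma checkK_self_add_one : checkK n a n (n + 1) = 0 := by
  rw [checkK, if_pos (by lia), checkKpos, if_neg (by lia), if_neg (by lia), if_neg (by lia),
    if_neg (by lia), if_neg (by lia)]

lemma checkK_sub_one (hd : 1 ≤ d) (hdn : d ≤ n) :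
    checkK n a d (d - 1) = (d : ℝ) ^ a / (2 * (d + 1 : ℝ) ^ a) := by
  rw [checkK, if_pos (by lia), checkKpos, if_neg (by lia), if_pos (by lia), Int.cast_natCast]

lemma checkK_diag (hd : 1 ≤ d) (hdn : d < n) :
    checkK n a d d = ((d + 1 : ℝ) ^ a - (d : ℝ) ^ a) / (2 * (d + 1 : ℝ) ^ a) := by
  rw [checkK, if_pos (by lia), checkKpos, if_neg (by lia), if_neg (by lia), if_neg (by lia),
    if_neg (by lia), if_pos (by lia), Int.cast_natCast]

lemma checkK_self : checkK n a n n = 1 - (n : ℝ) ^ a / (2 * (n + 1 : ℝ) ^ a) := by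
  rw [checkK, if_pos (by lia), checkKpos, if_neg (by lia), if_neg (by lia), if_neg (by lia),
    if_pos (by lia)]

lemma checkK_isSymmBirthDeath (hn : 1 ≤ n) (a : ℝ) :
    IsSymmBirthDeath n (checkK n a) (fun d => (d + 1 : ℝ) ^ a)
      fun d => if d ≤ n then (d : ℝ) ^ a / 2 else 0 where
  apply_neg_neg := ite_nonneg_neg_neg fun y => by
    unfold checkKpos
    split_ifs <;> first | rfl | lia
  mul_apply_add_one d hd := by
    obtain rfl | hd := hd.eq_or_lt
    · rw [checkK_self_add_one, if_neg (by lia), mul_zero]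
    · rw [checkK_add_one hd, if_pos (by lia), Nat.cast_succ, mul_one_div]
  mul_apply_sub_one d hd hdn := by
    rw [checkK_sub_one hd hdn, if_pos hdn]
    field_simp
  row_sum d hdn := by
    obtain rfl | hd := d.eq_zero_or_pos
    · have hn0 : (0 : ℤ) ≠ n := by lia
      norm_num [checkK, checkKpos, hn0, zero_lt_one.trans_le hn]
    · obtain rfl | hdn := hdn.eq_or_lt
      · rw [checkK_sub_one hd le_rfl, checkK_self, checkK_self_add_one]
        ring
      · rw [checkK_sub_one hd hdn.le, checkK_diag hd hdn, checkK_add_one hdn]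
        field_simp
        ring
  apply_eq_zero d y _ hy := by
    simp only [mem_Icc] at hy
    simp only [checkK, checkKpos, Nat.cast_nonneg, if_true]
    split_ifs <;> first | rfl | lia
  weight_pos d _ := by positivity
  conductance_pos d hd hdn := by
    rw [if_pos hdn]
    positivity
  conductance_add_one := if_neg (by lia)

lemma hatK_add_one (hd : d < n) :
    hatK n a d (d + 1) = (n - d : ℝ) ^ a / (2 * (n - d + 1 : ℝ) ^ a) := by
  rw [hatK, if_pos (by lia), hatKpos, if_neg (by lia), if_pos (by lia), Int.cast_natCast]

lemma hatK_self_add_one : hatK n a n (n + 1) = 0 := by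
  rw [hatK, if_pos (by lia), hatKpos, if_neg (by lia), if_neg (by lia), if_neg (by lia),
    if_neg (by lia), if_neg (by lia)]

lemma hatK_sub_one (hd : 1 ≤ d) (hdn : d ≤ n) : hatK n a d (d - 1) = 1 / 2 := by
  rw [hatK, if_pos (by lia), hatKpos, if_pos (by lia)]

lemma hatK_diag (hd : 1 ≤ d) :
    hatK n a d d = ((n - d + 1 : ℝ) ^ a - (n - d : ℝ) ^ a) / (2 * (n - d + 1 : ℝ) ^ a) := by
  rw [hatK, if_pos (by lia), hatKpos, if_neg (by lia), if_neg (by lia), if_neg (by lia),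
    if_neg (by lia), if_pos (by lia), Int.cast_natCast]

lemma sub_add_one_rpow_pos (hd : d ≤ n) (a : ℝ) : 0 < (n - d + 1 : ℝ) ^ a :=
  Real.rpow_pos_of_pos (by have : (d : ℝ) ≤ n := Nat.cast_le.2 hd; linarith) a

lemma hatK_isSymmBirthDeath (hn : 1 ≤ n) (ha : a ≠ 0) :
    IsSymmBirthDeath n (hatK n a) (fun d => (n - d + 1 : ℝ) ^ a)
      fun d => (n - d + 1 : ℝ) ^ a / 2 where
  apply_neg_neg := ite_nonneg_neg_neg fun y => by
    simp only [hatKpos, Int.cast_zero, sub_zero]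
    split_ifs <;> first | rfl | lia
  mul_apply_add_one d hd := by
    have := sub_add_one_rpow_pos hd a
    rw [Nat.cast_succ, sub_add_eq_sub_sub, sub_add_cancel]
    obtain rfl | hd := hd.eq_or_lt
    · rw [hatK_self_add_one, sub_self, Real.zero_rpow ha, mul_zero, zero_div]
    · rw [hatK_add_one hd]
      field_simp
  mul_apply_sub_one d hd hdn := by rw [hatK_sub_one hd hdn, mul_one_div]
  row_sum d hdn := by
    obtain rfl | hd := d.eq_zero_or_pos
    · calc
        _ = (n : ℝ) ^ a / (2 * (n + 1 : ℝ) ^ a) + (1 - (n : ℝ) ^ a / (n + 1 : ℝ) ^ a) +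
            (n : ℝ) ^ a / (2 * (n + 1 : ℝ) ^ a) := by
          simp [hatK, hatKpos, zero_lt_one.trans_le hn]
        _ = 1 := by ring
    · rw [hatK_sub_one hd hdn, hatK_diag hd]
      obtain rfl | hdn := hdn.eq_or_lt
      · rw [hatK_self_add_one, sub_self, Real.zero_rpow ha]
        norm_num
      · have := sub_add_one_rpow_pos hdn.le a
        rw [hatK_add_one hdn]
        field_simp
        ring
  apply_eq_zero d y _ hy := by
    simp only [mem_Icc] at hy
    simp only [hatK, hatKpos, Nat.cast_nonneg, if_true]
    split_ifs <;> first | rfl | lia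
  weight_pos _ hd := sub_add_one_rpow_pos hd a
  conductance_pos _ _ hd := half_pos (sub_add_one_rpow_pos hd a)
  conductance_add_one := by simp [Real.zero_rpow ha]

end Kernels

section PowerSums

lemma sum_range_le_two_mul_sum_range {F G : ℕ → ℝ} {N M : ℕ} (hNM : N ≤ 2 * M)
    (hFG : ∀ i, F i ≤ G (i / 2)) (hG : ∀ i, 0 ≤ G i) :
    ∑ i ∈ range N, F i ≤ 2 * ∑ i ∈ range M, G i := by
  have hdouble (K : ℕ) : ∑ i ∈ range (2 * K), G (i / 2) = 2 * ∑ i ∈ range K, G i := by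
    induction K with
    | zero => simp
    | succ K ih =>
      rw [Nat.mul_succ, sum_range_succ, sum_range_succ, ih, sum_range_succ,
        show (2 * K + 1) / 2 = K by lia, show 2 * K / 2 = K by lia]
      ring
  calc
    _ ≤ ∑ i ∈ range N, G (i / 2) := sum_le_sum fun i _ => hFG i
    _ ≤ ∑ i ∈ range (2 * M), G (i / 2) :=
      sum_le_sum_of_subset_of_nonneg (range_mono hNM) fun _ _ _ => hG _
    _ = _ := hdouble M

variable {a : ℝ} {k l k' l' m n : ℕ}

lemma eta_pos (a : ℝ) (hk : 1 ≤ k) (hkl : k ≤ l) : 0 < eta a k l :=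
  sum_pos (fun _ hi => Real.rpow_pos_of_pos (Nat.cast_pos.2 (hk.trans (mem_Icc.1 hi).1)) a)
    (nonempty_Icc.2 hkl)

lemma eta_one_half_pos (a : ℝ) (hn : 1 ≤ n) : 0 < eta a 1 ((n + 1) / 2) :=
  eta_pos a le_rfl (by lia)

lemma eta_half_pos (a : ℝ) (hn : 1 ≤ n) : 0 < eta a ((n + 1) / 2) n :=
  eta_pos a (by lia) (by lia)

lemma eta_nonneg (a : ℝ) (k l : ℕ) : 0 ≤ eta a k l :=
  sum_nonneg fun _ _ => by positivity

lemma eta_mono (a : ℝ) (hk : k' ≤ k) (hl : l ≤ l') : eta a k l ≤ eta a k' l' :=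
  sum_le_sum_of_subset_of_nonneg (Icc_subset_Icc hk hl) fun _ _ _ => by positivity

lemma eta_div_rpow (a : ℝ) (k l m : ℕ) :
    eta a k l / (m : ℝ) ^ a = ∑ i ∈ Icc k l, (i / m : ℝ) ^ a := by
  simp only [eta, sum_div, Real.div_rpow (Nat.cast_nonneg _) (Nat.cast_nonneg _)]

lemma sum_Icc_eq_sum_range_add (F : ℕ → ℝ) (k l : ℕ) :
    ∑ i ∈ Icc k l, F i = ∑ i ∈ range (l + 1 - k), F (k + i) := by
  rw [← Ico_add_one_right_eq_Icc, sum_Ico_eq_sum_range]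

lemma sum_Icc_eq_sum_range_sub (F : ℕ → ℝ) (k l : ℕ) :
    ∑ i ∈ Icc k l, F i = ∑ i ∈ range (l + 1 - k), F (l - i) := by
  rw [sum_Icc_eq_sum_range_add, ← sum_range_reflect]
  exact sum_congr rfl fun i hi => congrArg F (by have := mem_range.1 hi; lia)

lemma mul_half_le_mul (h : k ≤ 2 * m) (i : ℕ) : k * (i / 2) ≤ m * i :=
  calc
    k * (i / 2) ≤ 2 * m * (i / 2) := Nat.mul_le_mul_right _ h
    _ = m * (2 * (i / 2)) := by ring
    _ ≤ m * i := Nat.mul_le_mul_left _ (Nat.mul_div_le i 2)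

lemma eta_div_rpow_left_le (ha : a ≤ 0) (hk : 1 ≤ k) (hkk' : k ≤ 2 * k')
    (hlen : l + 1 - k ≤ 2 * (l' + 1 - k')) :
    eta a k l / (k : ℝ) ^ a ≤ 2 * (eta a k' l' / (k' : ℝ) ^ a) := by
  rw [eta_div_rpow, eta_div_rpow, sum_Icc_eq_sum_range_add, sum_Icc_eq_sum_range_add]
  have hk0 : (0 : ℝ) < k := Nat.cast_pos.2 hk
  have hk'0 : (0 : ℝ) < k' := Nat.cast_pos.2 (by lia)
  refine sum_range_le_two_mul_sum_range hlen (fun i => ?_) fun i => by positivity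
  refine Real.rpow_le_rpow_of_nonpos (div_pos (Nat.cast_pos.2 (by lia)) hk'0) ?_ ha
  rw [div_le_div_iff₀ hk'0 hk0]
  have := mul_half_le_mul hkk' i
  exact_mod_cast show (k' + i / 2) * k ≤ (k + i) * k' by lia

lemma eta_div_rpow_right_le (ha : 0 ≤ a) (hl : 1 ≤ l) (hll' : l ≤ 2 * l')
    (hlen : l + 1 - k ≤ 2 * (l' + 1 - k')) :
    eta a k l / (l : ℝ) ^ a ≤ 2 * (eta a k' l' / (l' : ℝ) ^ a) := by
  rw [eta_div_rpow, eta_div_rpow, sum_Icc_eq_sum_range_sub, sum_Icc_eq_sum_range_sub]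
  have hl0 : (0 : ℝ) < l := Nat.cast_pos.2 hl
  have hl'0 : (0 : ℝ) < l' := Nat.cast_pos.2 (by lia)
  refine sum_range_le_two_mul_sum_range hlen (fun i => ?_) fun i => by positivity
  refine Real.rpow_le_rpow (by positivity) ?_ ha
  rw [div_le_div_iff₀ hl0 hl'0]
  have := mul_half_le_mul hll' i
  exact_mod_cast show (l - i) * l' ≤ (l' - i / 2) * l by
    rw [Nat.sub_mul, Nat.sub_mul]
    lia

lemma eta_neg_one_le_two_mul (ha : 0 ≤ a) (hmn : n ≤ 2 * m) :
    eta (-a) 1 n ≤ 2 * eta (-a) 1 m := by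
  simpa using eta_div_rpow_left_le (k' := 1) (l := n) (l' := m) (neg_nonpos.2 ha) le_rfl
    one_le_two (by lia)

lemma eta_le_two_mul (ha : 0 ≤ a) (hl : 1 ≤ l) (hlen : l + 1 - k ≤ 2 * (l + 1 - k')) :
    eta a k l ≤ 2 * eta a k' l := by
  have hl0 : (0 : ℝ) < (l : ℝ) ^ a := Real.rpow_pos_of_pos (Nat.cast_pos.2 hl) a
  rw [← div_le_div_iff_of_pos_right hl0, mul_div_assoc]
  exact eta_div_rpow_right_le ha hl (by lia) hlen

lemma div_rpow_neg_mul_div_rpow {x : ℝ} (hx : 0 < x) (a b c : ℝ) :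
    b / x ^ (-a) * (c / x ^ a) = b * c := by
  rw [div_mul_div_comm, ← Real.rpow_add hx, neg_add_cancel, Real.rpow_zero, div_one]

lemma eta_neg_mul_eta_le (ha : 0 ≤ a) (hk : 1 ≤ k) (hkm : k ≤ 2 * m)
    (hlen : n + 1 - k ≤ 2 * (n + 1 - m)) :
    eta (-a) k n * eta a 1 k ≤ 4 * (eta (-a) m n * eta a 1 m) := by
  have hk0 : (0 : ℝ) < k := Nat.cast_pos.2 hk
  have hm0 : (0 : ℝ) < m := Nat.cast_pos.2 (by lia)
  have hleft := eta_div_rpow_left_le (neg_nonpos.2 ha) hk hkm hlen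
  have hright := eta_div_rpow_right_le (k := 1) (k' := 1) ha hk hkm hkm
  have hpos (b : ℝ) (i j s : ℕ) : 0 ≤ eta b i j / (s : ℝ) ^ b :=
    div_nonneg (eta_nonneg b i j) (by positivity)
  calc
    _ = eta (-a) k n / (k : ℝ) ^ (-a) * (eta a 1 k / (k : ℝ) ^ a) :=
      (div_rpow_neg_mul_div_rpow hk0 _ _ _).symm
    _ ≤ 2 * (eta (-a) m n / (m : ℝ) ^ (-a)) * (2 * (eta a 1 m / (m : ℝ) ^ a)) :=
      mul_le_mul hleft hright (hpos _ _ _ _) (mul_nonneg zero_le_two (hpos _ _ _ _))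
    _ = 4 * (eta (-a) m n / (m : ℝ) ^ (-a) * (eta a 1 m / (m : ℝ) ^ a)) := by ring
    _ = _ := by rw [div_rpow_neg_mul_div_rpow hm0]

end PowerSums

section Gaps

variable {n r : ℕ} {a γ : ℝ}

lemma sum_inv_conductance_check (a : ℝ) (hrn : r ≤ n) :
    ∑ j ∈ Icc 1 r, (if j ≤ n then (j : ℝ) ^ a / 2 else 0)⁻¹ = 2 * eta (-a) 1 r := by
  rw [eta, mul_sum]
  refine sum_congr rfl fun j hj => ?_
  rw [if_pos ((mem_Icc.1 hj).2.trans hrn), inv_div, Real.rpow_neg j.cast_nonneg, div_eq_mul_inv]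

lemma sum_weight_check (a : ℝ) (r n : ℕ) :
    ∑ d ∈ Icc r n, (d + 1 : ℝ) ^ a = eta a (r + 1) (n + 1) := by
  rw [eta, ← map_add_right_Icc, sum_map]
  simp only [addRightEmbedding_apply, Nat.cast_succ]

lemma sum_Icc_reflect_rpow (a : ℝ) (hr : 1 ≤ r) {s : ℕ} (hs : s ≤ n) :
    ∑ d ∈ Icc r s, (n - d + 1 : ℝ) ^ a = eta a (n + 1 - s) (n + 1 - r) :=
  sum_nbij' (n + 1 - ·) (n + 1 - ·) (fun d => by simp only [mem_Icc]; lia)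
    (fun i => by simp only [mem_Icc]; lia) (fun d => by simp only [mem_Icc]; lia)
    (fun i => by simp only [mem_Icc]; lia) fun d hd => by
      rw [Nat.cast_sub (by have := mem_Icc.1 hd; lia), Nat.cast_succ, sub_add_eq_add_sub]

lemma sum_inv_conductance_hat (a : ℝ) (hrn : r ≤ n) :
    ∑ j ∈ Icc 1 r, ((n - j + 1 : ℝ) ^ a / 2)⁻¹ = 2 * eta (-a) (n + 1 - r) n := by
  have hsum := sum_Icc_reflect_rpow (-a) le_rfl hrn
  rw [Nat.add_sub_cancel] at hsum
  rw [← hsum, mul_sum]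
  refine sum_congr rfl fun j hj => ?_
  have hjn : (j : ℝ) ≤ n := Nat.cast_le.2 ((mem_Icc.1 hj).2.trans hrn)
  rw [inv_div, Real.rpow_neg (by linarith), div_eq_mul_inv]

theorem one_div_le_checkGap (hn : 1 ≤ n) (a : ℝ)
    (hγ : IsGapOf (m := 2 * n) (checkMat n a) γ) :
    1 / (8 * eta (-a) 1 n * eta a 2 (n + 1)) ≤ γ := by
  have hη := eta_pos (-a) le_rfl hn
  have hη' := eta_pos a one_le_two (Nat.succ_le_succ hn)
  calc
    _ = 1 / (4 * (2 * eta (-a) 1 n * eta a 2 (n + 1))) := by ring_nf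
    _ ≤ γ := (checkK_isSymmBirthDeath hn a).one_div_le_gap hγ (by positivity) fun r hr hrn => by
      rw [sum_inv_conductance_check a hrn, sum_weight_check]
      gcongr
      · exact eta_nonneg ..
      · exact eta_mono _ le_rfl hrn
      · exact eta_mono _ (by lia) le_rfl

theorem checkGap_le (hn : 1 ≤ n) (ha : 0 ≤ a)
    (hγ : IsGapOf (m := 2 * n) (checkMat n a) γ) :
    γ ≤ 2 / (eta (-a) 1 n * eta a 2 (n + 1)) := by
  have hη := eta_pos (-a) le_rfl hn
  have hη' := eta_pos a one_le_two (Nat.succ_le_succ hn)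
  have h := checkK_isSymmBirthDeath hn a
  have hγ0 := h.gap_nonneg hγ
  have hgap := h.gap_mul_le_one hγ (r := (n + 1) / 2) (by lia) (by lia)
  rw [sum_inv_conductance_check a (by lia), sum_weight_check] at hgap
  rw [le_div_iff₀ (by positivity)]
  calc
    _ ≤ γ * (2 * eta (-a) 1 ((n + 1) / 2) * (2 * eta a ((n + 1) / 2 + 1) (n + 1))) := by
      gcongr
      · exact mul_nonneg zero_le_two (eta_nonneg ..)
      · exact eta_neg_one_le_two_mul ha (by lia)
      · exact eta_le_two_mul ha (by lia) (by lia)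
    _ = 2 * (γ * (2 * eta (-a) 1 ((n + 1) / 2) * eta a ((n + 1) / 2 + 1) (n + 1))) := by ring
    _ ≤ 2 := by linarith

theorem one_div_le_hatGap (hn : 1 ≤ n) (ha : 0 < a)
    (hγ : IsGapOf (m := 2 * n) (hatMat n a) γ) :
    1 / (32 * eta a 1 ((n + 1) / 2) * eta (-a) ((n + 1) / 2) n) ≤ γ := by
  have hη := eta_one_half_pos a hn
  have hη' := eta_half_pos (-a) hn
  calc
    _ = 1 / (4 * (8 * (eta (-a) ((n + 1) / 2) n * eta a 1 ((n + 1) / 2)))) := by ring_nf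
    _ ≤ γ := (hatK_isSymmBirthDeath hn ha.ne').one_div_le_gap hγ (by positivity)
        fun r hr hrn => by
      rw [sum_inv_conductance_hat a hrn, sum_Icc_reflect_rpow a hr le_rfl, Nat.add_sub_cancel_left]
      have := eta_neg_mul_eta_le (n := n) (k := n + 1 - r) (m := (n + 1) / 2) ha.le (by lia)
        (by lia) (by lia)
      linarith

theorem hatGap_le (hn : 1 ≤ n) (ha : a ≠ 0)
    (hγ : IsGapOf (m := 2 * n) (hatMat n a) γ) :
    γ ≤ 1 / (2 * eta a 1 ((n + 1) / 2) * eta (-a) ((n + 1) / 2) n) := by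
  have hη := eta_one_half_pos a hn
  have hη' := eta_half_pos (-a) hn
  have hgap := (hatK_isSymmBirthDeath hn ha).gap_mul_le_one hγ (r := n + 1 - (n + 1) / 2)
    (by lia) (by lia)
  rw [sum_inv_conductance_hat a (by lia), sum_Icc_reflect_rpow a (by lia) le_rfl,
    Nat.add_sub_cancel_left, Nat.sub_sub_self (by lia)] at hgap
  rw [le_div_iff₀ (by positivity)]
  linarith

end Gaps

theorem stmt18 (n : ℕ) (hn : 1 ≤ n) (a : ℝ) (ha : 0 < a)
    (checkGap hatGap : ℝ)
    (hcheck : IsGapOf (m := 2 * n) (checkMat n a) checkGap)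
    (hhat : IsGapOf (m := 2 * n) (hatMat n a) hatGap) :
    (1 / (8 * eta (-a) 1 n * eta a 2 (n + 1)) ≤ checkGap ∧
      checkGap ≤ 2 / (eta (-a) 1 n * eta a 2 (n + 1))) ∧
    (1 / (64 * eta a 1 ((n + 1) / 2) * eta (-a) ((n + 1) / 2) n) ≤ hatGap ∧
      hatGap ≤ 1 / (2 * eta a 1 ((n + 1) / 2) * eta (-a) ((n + 1) / 2) n)) := by
  refine ⟨⟨one_div_le_checkGap hn a hcheck, checkGap_le hn ha.le hcheck⟩,
    le_trans ?_ (one_div_le_hatGap hn ha hhat), hatGap_le hn ha.ne' hhat⟩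
  have hη := eta_one_half_pos a hn
  have hη' := eta_half_pos (-a) hn
  gcongr
  norm_num
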